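/- Let a > m. Define pathwise τ̲_a := inf{t ∈ [0,T] : M_t ≥ a} ∧ T and τ̄_a := inf{t ∈ [0,T] : M_t > a} ∧ T (inf ∅ := +∞). Then for every t ∈ [0,T], M_{t ∧ τ̲_a} = M_{t ∧ τ̄_a} P-almost surely. -/

import Mathlib

open MeasureTheory Set

/-! A continuous martingale `X` satisfies `∫ X_τ = ∫ X_T` for every optional time `τ ≤ T`. Let
`σ ≤ ρ` be the hitting times of `[a, ∞)` and `(a, ∞)`, both capped at `t`. Path by path
`X_ρ ≤ X_σ`: if `σ < ρ`, then `X_σ ≥ a` because `[a, ∞)` is closed, whereas `X` has not exceeded `a`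
before `ρ`, so that `X_ρ ≤ a`. As both sides have the same integral, they agree almost surely. -/

open Filter Topology

section ConditionalExpectation

variable {Ω : Type*} {mΩ : MeasurableSpace Ω} {μ : Measure Ω} [IsFiniteMeasure μ]
  {𝒜 : ℕ → MeasurableSpace Ω} {f g : Ω → ℝ}

lemma integrable_of_tendsto_condExp (h𝒜 : ∀ n, 𝒜 n ≤ mΩ) (hf : Integrable f μ)
    (hfg : ∀ᵐ ω ∂μ, Tendsto (fun n => μ[f | 𝒜 n] ω) atTop (𝓝 (g ω))) : Integrable g μ :=
  (hf.uniformIntegrable_condExp h𝒜).integrable_of_tendstoInMeasure <|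
    tendstoInMeasure_of_tendsto_ae (fun _ => integrable_condExp.aestronglyMeasurable) hfg

lemma integral_eq_of_tendsto_condExp (h𝒜 : ∀ n, 𝒜 n ≤ mΩ) (hf : Integrable f μ)
    (hfg : ∀ᵐ ω ∂μ, Tendsto (fun n => μ[f | 𝒜 n] ω) atTop (𝓝 (g ω))) :
    ∫ ω, g ω ∂μ = ∫ ω, f ω ∂μ := by
  have hg : Integrable g μ := integrable_of_tendsto_condExp h𝒜 hf hfg
  have tendsto_L1 : Tendsto (fun n => eLpNorm (μ[f | 𝒜 n] - g) 1 μ) atTop (𝓝 0) :=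
    tendsto_Lp_finite_of_tendsto_ae le_rfl ENNReal.one_ne_top
      (fun _ => integrable_condExp.aestronglyMeasurable) (memLp_one_iff_integrable.2 hg)
      (hf.uniformIntegrable_condExp h𝒜).unifIntegrable hfg
  have tendsto_integral : Tendsto (fun n => ∫ ω, (μ[f | 𝒜 n]) ω ∂μ) atTop (𝓝 (∫ ω, g ω ∂μ)) :=
    tendsto_integral_of_L1' g hg.aestronglyMeasurable
      (Eventually.of_forall fun _ => integrable_condExp) tendsto_L1
  simp only [integral_condExp (h𝒜 _)] at tendsto_integral
  exact tendsto_nhds_unique tendsto_integral tendsto_const_nhds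

end ConditionalExpectation

section Grid

/-- The first point of the grid `ℤ / (n + 1)` that is strictly larger than `x`. Rounding an
optional time up in this way yields a stopping time with countable range. -/
noncomputable def gridSucc (n : ℕ) (x : ℝ) : ℝ := (⌊(n + 1) * x⌋ + 1) / (n + 1)

lemma lt_gridSucc (n : ℕ) (x : ℝ) : x < gridSucc n x := by
  rw [gridSucc, lt_div_iff₀' (by positivity)]
  exact Int.lt_floor_add_one _

lemma gridSucc_le_add (n : ℕ) (x : ℝ) : gridSucc n x ≤ x + 1 / (n + 1) := by
  have hn : (0 : ℝ) < n + 1 := by positivity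
  rw [gridSucc, add_div, add_le_add_iff_right, div_le_iff₀' hn]
  exact Int.floor_le _

lemma gridSucc_le_iff (n : ℕ) (x s : ℝ) :
    gridSucc n x ≤ s ↔ x < ⌊(n + 1) * s⌋ / (n + 1) := by
  have hn : (0 : ℝ) < n + 1 := by positivity
  rw [gridSucc, div_le_iff₀' hn, lt_div_iff₀' hn, ← Int.floor_lt, ← Int.add_one_le_iff,
    Int.le_floor, Int.cast_add, Int.cast_one]

lemma tendsto_gridSucc (x : ℝ) : Tendsto (fun n => gridSucc n x) atTop (𝓝 x) := by
  have upper : Tendsto (fun n : ℕ => x + 1 / ((n : ℝ) + 1)) atTop (𝓝 x) := by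
    simpa only [add_zero] using tendsto_one_div_add_atTop_nhds_zero_nat.const_add x
  exact tendsto_of_tendsto_of_tendsto_of_le_of_le tendsto_const_nhds upper
    (fun n => (lt_gridSucc n x).le) (fun n => gridSucc_le_add n x)

lemma countable_range_gridSucc (n : ℕ) : (range (gridSucc n)).Countable :=
  (countable_range fun k : ℤ => ((k : ℝ) + 1) / (n + 1)).mono <|
    range_comp_subset_range (fun x : ℝ => ⌊(n + 1) * x⌋) fun k : ℤ => ((k : ℝ) + 1) / (n + 1)

end Grid

/-- Optional times, also called weak stopping times: only the events `{τ < s}`, rather than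
`{τ ≤ s}`, are required to be known at time `s`. Without right-continuity of the filtration, the
hitting time of an open set is in general optional but not a stopping time. -/
def IsOptionalTime {Ω ι : Type*} {mΩ : MeasurableSpace Ω} [Preorder ι] (𝒢 : Filtration ι mΩ)
    (τ : Ω → ι) : Prop :=
  ∀ s, MeasurableSet[𝒢 s] {ω | τ ω < s}

namespace IsOptionalTime

lemma const_min {Ω ι : Type*} {mΩ : MeasurableSpace Ω} [LinearOrder ι] {𝒢 : Filtration ι mΩ}
    {τ : Ω → ι} (hτ : IsOptionalTime 𝒢 τ) (t : ι) : IsOptionalTime 𝒢 fun ω => min t (τ ω) := by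
  intro s
  simp only [min_lt_iff, ofPred_or]
  exact (MeasurableSet.const _).union (hτ s)

section Sampling

variable {Ω : Type*} {mΩ : MeasurableSpace Ω} {μ : Measure Ω} {𝒢 : Filtration ℝ mΩ} {τ : Ω → ℝ}

lemma isStoppingTime_gridSucc (hτ : IsOptionalTime 𝒢 τ) (n : ℕ) :
    IsStoppingTime 𝒢 fun ω => (gridSucc n (τ ω) : WithTop ℝ) := by
  intro s
  have floor_le : (⌊(n + 1) * s⌋ : ℝ) / (n + 1) ≤ s := by
    rw [div_le_iff₀' (by positivity)]
    exact Int.floor_le _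
  simp only [WithTop.coe_le_coe, gridSucc_le_iff]
  exact 𝒢.mono floor_le _ (hτ _)

variable [IsFiniteMeasure μ] {X : ℝ → Ω → ℝ} {T : ℝ}

lemma exists_tendsto_condExp (hτ : IsOptionalTime 𝒢 τ) (hτT : ∀ ω, τ ω ≤ T)
    (hX : Martingale X 𝒢 μ) (hXr : ∀ ω s, ContinuousWithinAt (X · ω) (Ici s) s) :
    ∃ 𝒜 : ℕ → MeasurableSpace Ω, (∀ n, 𝒜 n ≤ mΩ) ∧
      ∀ᵐ ω ∂μ, Tendsto (fun n => μ[X T | 𝒜 n] ω) atTop (𝓝 (X (τ ω) ω)) := by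
  have hσ (n : ℕ) : IsStoppingTime 𝒢 fun ω => min (gridSucc n (τ ω) : WithTop ℝ) T :=
    (hτ.isStoppingTime_gridSucc n).min_const T
  have countable_range (n : ℕ) :
      (range fun ω => min (gridSucc n (τ ω) : WithTop ℝ) T).Countable :=
    ((countable_range_gridSucc n).image fun x : ℝ => min (x : WithTop ℝ) T).mono <|
      range_subset_iff.2 fun ω =>
        mem_image_of_mem (fun x : ℝ => min (x : WithTop ℝ) T) (mem_range_self (τ ω))
  have sampling (n : ℕ) :
      (fun ω => X (min (gridSucc n (τ ω)) T) ω) =ᵐ[μ] μ[X T | (hσ n).measurableSpace] :=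
    hX.stoppedValue_ae_eq_condExp_of_le_const_of_countable_range (hσ n)
      (fun _ => min_le_right _ _) (countable_range n)
  refine ⟨fun n => (hσ n).measurableSpace, fun n => (hσ n).measurableSpace_le, ?_⟩
  filter_upwards [ae_all_iff.2 sampling] with ω hω
  have tendsto_time : Tendsto (fun n => min (gridSucc n (τ ω)) T) atTop (𝓝[≥] τ ω) := by
    refine tendsto_nhdsWithin_of_tendsto_nhds_of_eventually_within _ ?_ <|
      Eventually.of_forall fun n => le_min (lt_gridSucc n _).le (hτT ω)
    simpa only [min_eq_left (hτT ω)] using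
      (tendsto_gridSucc (τ ω)).min (tendsto_const_nhds (x := T))
  exact ((hXr ω (τ ω)).tendsto.comp tendsto_time).congr hω

lemma integrable_martingale (hτ : IsOptionalTime 𝒢 τ) (hτT : ∀ ω, τ ω ≤ T)
    (hX : Martingale X 𝒢 μ) (hXr : ∀ ω s, ContinuousWithinAt (X · ω) (Ici s) s) :
    Integrable (fun ω => X (τ ω) ω) μ := by
  obtain ⟨𝒜, h𝒜, tendsto_X⟩ := hτ.exists_tendsto_condExp hτT hX hXr
  exact integrable_of_tendsto_condExp h𝒜 (hX.integrable T) tendsto_X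

theorem integral_martingale (hτ : IsOptionalTime 𝒢 τ) (hτT : ∀ ω, τ ω ≤ T)
    (hX : Martingale X 𝒢 μ) (hXr : ∀ ω s, ContinuousWithinAt (X · ω) (Ici s) s) :
    ∫ ω, X (τ ω) ω ∂μ = ∫ ω, X T ω ∂μ := by
  obtain ⟨𝒜, h𝒜, tendsto_X⟩ := hτ.exists_tendsto_condExp hτT hX hXr
  exact integral_eq_of_tendsto_condExp h𝒜 (hX.integrable T) tendsto_X

theorem martingale_ae_eq_of_ae_le {σ : Ω → ℝ} (hσ : IsOptionalTime 𝒢 σ) (hτ : IsOptionalTime 𝒢 τ)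
    (hσT : ∀ ω, σ ω ≤ T) (hτT : ∀ ω, τ ω ≤ T) (hX : Martingale X 𝒢 μ)
    (hXr : ∀ ω s, ContinuousWithinAt (X · ω) (Ici s) s)
    (hle : ∀ᵐ ω ∂μ, X (σ ω) ω ≤ X (τ ω) ω) : ∀ᵐ ω ∂μ, X (σ ω) ω = X (τ ω) ω :=
  (integral_eq_iff_of_ae_le (hσ.integrable_martingale hσT hX hXr)
    (hτ.integrable_martingale hτT hX hXr) hle).1 <|
    (hσ.integral_martingale hσT hX hXr).trans (hτ.integral_martingale hτT hX hXr).symm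

end Sampling

end IsOptionalTime

lemma inter_nonempty_of_forall_inter_thickening_nonempty {β : Type*} [PseudoMetricSpace β]
    {K S : Set β} (hK : IsCompact K) (hS : IsClosed S)
    (h : ∀ n : ℕ, (K ∩ Metric.thickening (1 / (n + 1)) S).Nonempty) : (K ∩ S).Nonempty := by
  by_contra hKS
  obtain ⟨δ, hδ, hdisj⟩ := (disjoint_iff_inter_eq_empty.2
    (not_nonempty_iff_eq_empty.1 hKS)).exists_thickenings hK hS
  obtain ⟨n, hn⟩ := exists_nat_one_div_lt hδ
  obtain ⟨x, hxK, hxS⟩ := h n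
  exact disjoint_left.1 hdisj (Metric.self_subset_thickening hδ K hxK)
    (Metric.thickening_mono hn.le S hxS)

section HittingTime

variable {Ω ι β : Type*} [ConditionallyCompleteLinearOrder ι] {X : ι → Ω → β} {S : Set β}
  {t₀ t₁ s : ι} {ω : Ω}

lemma sInf_union_singleton_eq_hittingBtwn :
    sInf ({s ∈ Icc t₀ t₁ | X s ω ∈ S} ∪ {t₁}) = hittingBtwn X S t₀ t₁ ω := by
  classical
  simp only [hittingBtwn_def]
  split_ifs with hit
  · have hbdd : BddBelow {s ∈ Icc t₀ t₁ | X s ω ∈ S} := bddBelow_Icc.mono (sep_subset _ _)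
    obtain ⟨s, hs, hXs⟩ := hit
    rw [csInf_union hbdd ⟨s, hs, hXs⟩ bddBelow_singleton (singleton_nonempty _),
      csInf_singleton]
    exact inf_of_le_left ((csInf_le hbdd ⟨hs, hXs⟩).trans hs.2)
  · have : {s ∈ Icc t₀ t₁ | X s ω ∈ S} = ∅ :=
      eq_empty_of_forall_notMem fun s hs => hit ⟨s, hs⟩
    rw [this, empty_union, csInf_singleton]

lemma hittingBtwn_congr {Y : ι → Ω → β} (h : EqOn (X · ω) (Y · ω) (Icc t₀ t₁)) :
    hittingBtwn X S t₀ t₁ ω = hittingBtwn Y S t₀ t₁ ω := by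
  rw [← sInf_union_singleton_eq_hittingBtwn, ← sInf_union_singleton_eq_hittingBtwn]
  congr 2
  ext s
  exact and_congr_right fun hs => by rw [show X s ω = Y s ω from h hs]

variable [TopologicalSpace ι] [OrderTopology ι] [TopologicalSpace β]

lemma mem_of_hittingBtwn_lt_of_isClosed (hS : IsClosed S)
    (hX : ContinuousOn (X · ω) (Icc t₀ t₁)) (h : hittingBtwn X S t₀ t₁ ω < t₁) :
    X (hittingBtwn X S t₀ t₁ ω) ω ∈ S := by
  classical
  obtain ⟨s, hs, hXs⟩ := (hittingBtwn_lt_iff t₁ le_rfl).1 h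
  have hit : ∃ s ∈ Icc t₀ t₁, X s ω ∈ S := ⟨s, Ico_subset_Icc_self hs, hXs⟩
  have hclosed : IsClosed (Icc t₀ t₁ ∩ {s | X s ω ∈ S}) :=
    hX.preimage_isClosed_of_isClosed isClosed_Icc hS
  rw [hittingBtwn_def]
  simp only [if_pos hit]
  exact (hclosed.csInf_mem hit bddBelow_Icc.inter_of_left).2

lemma notMem_of_le_hittingBtwn_of_isOpen [DenselyOrdered ι] (hS : IsOpen S)
    (hX : ContinuousWithinAt (X · ω) (Iio s) s) (hs₀ : t₀ < s)
    (hs : s ≤ hittingBtwn X S t₀ t₁ ω) : X s ω ∉ S := by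
  have : (𝓝[<] s).NeBot := nhdsLT_neBot_of_exists_lt ⟨t₀, hs₀⟩
  refine hS.isClosed_compl.mem_of_tendsto hX.tendsto ?_
  filter_upwards [Ioo_mem_nhdsLT hs₀] with r hr
  exact notMem_of_lt_hittingBtwn (hr.2.trans_le hs) hr.1.le

variable [DenselyOrdered ι] [TopologicalSpace.SeparableSpace ι] {mΩ : MeasurableSpace Ω}
  {𝒢 : Filtration ι mΩ} [MeasurableSpace β] [OpensMeasurableSpace β]

lemma isOptionalTime_hittingBtwn_of_isOpen (hadp : Adapted 𝒢 X)
    (hXr : ∀ ω s, ContinuousWithinAt (X · ω) (Ici s) s) (hS : IsOpen S) :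
    IsOptionalTime 𝒢 (hittingBtwn X S t₀ t₁) := by
  intro s
  rcases lt_or_ge t₁ s with hs | hs
  · simp only [(hittingBtwn_le _).trans_lt hs, MeasurableSet.const]
  obtain ⟨D, D_countable, D_dense⟩ := TopologicalSpace.exists_countable_dense ι
  have hit_in_D : {ω | hittingBtwn X S t₀ t₁ ω < s} = ⋃ q ∈ D ∩ Ico t₀ s, {ω | X q ω ∈ S} := by
    ext ω
    simp only [mem_ofPred_eq, hittingBtwn_lt_iff s hs, mem_iUnion, exists_prop]
    refine ⟨?_, fun ⟨q, hq, hXq⟩ => ⟨q, hq.2, hXq⟩⟩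
    rintro ⟨j, hj, hXj⟩
    have near : {r | X r ω ∈ S} ∩ Ico j s ∈ 𝓝[≥] j :=
      inter_mem (hXr ω j (hS.mem_nhds hXj)) (Ico_mem_nhdsGE hj.2)
    obtain ⟨u, hu, hsub⟩ := (mem_nhdsGE_iff_exists_Ico_subset' hj.2).1 near
    obtain ⟨q, hqD, hq⟩ := D_dense.exists_between hu
    have hq' := hsub (Ioo_subset_Ico_self hq)
    exact ⟨q, ⟨hqD, hj.1.trans hq'.2.1, hq'.2.2⟩, hq'.1⟩
  rw [hit_in_D]
  exact .biUnion (D_countable.mono inter_subset_left) fun q hq =>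
    𝒢.mono hq.2.2.le _ (hadp q hS.measurableSet)

end HittingTime

theorem isOptionalTime_hittingBtwn_of_isClosed {Ω ι β : Type*} {mΩ : MeasurableSpace Ω}
    [ConditionallyCompleteLinearOrder ι] [TopologicalSpace ι] [OrderTopology ι] [DenselyOrdered ι]
    [TopologicalSpace.SeparableSpace ι] [PseudoMetricSpace β] [MeasurableSpace β]
    [OpensMeasurableSpace β] {𝒢 : Filtration ι mΩ} {X : ι → Ω → β} {S : Set β} {t₀ t₁ : ι}
    (hadp : Adapted 𝒢 X) (hX : ∀ ω, Continuous (X · ω)) (hS : IsClosed S) :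
    IsOptionalTime 𝒢 (hittingBtwn X S t₀ t₁) := by
  intro s
  rcases lt_or_ge t₁ s with hs | hs
  · simp only [(hittingBtwn_le _).trans_lt hs, MeasurableSet.const]
  obtain ⟨D, D_countable, D_dense⟩ := TopologicalSpace.exists_countable_dense ι
  let U (n : ℕ) : Set β := Metric.thickening (1 / (n + 1)) S
  have hit_iff_near : {ω | hittingBtwn X S t₀ t₁ ω < s} =
      ⋃ q ∈ D ∩ Iio s, ⋂ n, {ω | hittingBtwn X (U n) t₀ t₁ ω < q} := by
    ext ω
    simp only [mem_ofPred_eq, mem_iUnion, mem_iInter, exists_prop]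
    constructor
    · intro hit
      obtain ⟨j, hj, hXj⟩ := (hittingBtwn_lt_iff s hs).1 hit
      obtain ⟨q, hqD, hjq, hqs⟩ := D_dense.exists_between hj.2
      refine ⟨q, ⟨hqD, hqs⟩, fun n => (hittingBtwn_lt_iff q (hqs.le.trans hs)).2 ?_⟩
      exact ⟨j, ⟨hj.1, hjq⟩, Metric.self_subset_thickening Nat.one_div_pos_of_nat S hXj⟩
    · rintro ⟨q, ⟨-, hqs⟩, near⟩
      have near_on_path (n : ℕ) : ((X · ω) '' Icc t₀ q ∩ U n).Nonempty := by
        obtain ⟨j, hj, hXj⟩ := (hittingBtwn_lt_iff q (hqs.le.trans hs)).1 (near n)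
        exact ⟨X j ω, mem_image_of_mem _ (Ico_subset_Icc_self hj), hXj⟩
      obtain ⟨_, ⟨j, hj, rfl⟩, hXj⟩ := inter_nonempty_of_forall_inter_thickening_nonempty
        (isCompact_Icc.image (hX ω)) hS near_on_path
      exact (hittingBtwn_lt_iff s hs).2 ⟨j, ⟨hj.1, hj.2.trans_lt hqs⟩, hXj⟩
  rw [hit_iff_near]
  exact .biUnion (D_countable.mono inter_subset_left) fun q hq => .iInter fun n =>
    𝒢.mono hq.2.le _ <| isOptionalTime_hittingBtwn_of_isOpen hadp
      (fun ω _ => (hX ω).continuousWithinAt) Metric.isOpen_thickening q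

section LevelPassage

variable {Ω : Type*} {mΩ : MeasurableSpace Ω}

lemma eval_min_hittingBtwn_Ioi_le_Ici {ι β : Type*} [ConditionallyCompleteLinearOrder ι]
    [TopologicalSpace ι] [OrderTopology ι] [DenselyOrdered ι] [LinearOrder β] [TopologicalSpace β]
    [OrderClosedTopology β] {X : ι → Ω → β} {t₀ t₁ t : ι} {ω : Ω} (hX : Continuous (X · ω))
    (ht₀ : t₀ ≤ t) (ht₁ : t ≤ t₁) (a : β) :
    X (min t (hittingBtwn X (Ioi a) t₀ t₁ ω)) ω ≤
      X (min t (hittingBtwn X (Ici a) t₀ t₁ ω)) ω := by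
  set σ := hittingBtwn X (Ici a) t₀ t₁ ω
  set ρ := hittingBtwn X (Ioi a) t₀ t₁ ω
  have hσρ : σ ≤ ρ := hittingBtwn_apply_anti X t₀ t₁ ω Ioi_subset_Ici_self
  rcases (min_le_min_left t hσρ).eq_or_lt with heq | hlt
  · rw [heq]
  have hσt : σ < t := by
    by_contra! h
    exact hlt.not_ge ((min_eq_left h).symm ▸ min_le_left _ _)
  rw [min_eq_right hσt.le] at hlt ⊢
  have not_above : X (min t ρ) ω ∉ Ioi a :=
    notMem_of_le_hittingBtwn_of_isOpen isOpen_Ioi hX.continuousWithinAt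
      ((le_hittingBtwn (ht₀.trans ht₁) ω).trans_lt hlt) (min_le_right t ρ)
  have reached : X σ ω ∈ Ici a :=
    mem_of_hittingBtwn_lt_of_isClosed isClosed_Ici hX.continuousOn (hσt.trans_le ht₁)
  exact (not_lt.1 not_above).trans reached

theorem martingale_min_hittingBtwn_Ici_ae_eq_Ioi {μ : Measure Ω} [IsFiniteMeasure μ]
    {𝒢 : Filtration ℝ mΩ} {X : ℝ → Ω → ℝ} (hX : Martingale X 𝒢 μ)
    (hXc : ∀ ω, Continuous (X · ω)) {t₀ t₁ t : ℝ} (ht : t ∈ Icc t₀ t₁) (a : ℝ) :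
    ∀ᵐ ω ∂μ, X (min t (hittingBtwn X (Ici a) t₀ t₁ ω)) ω =
      X (min t (hittingBtwn X (Ioi a) t₀ t₁ ω)) ω := by
  have hXr (ω : Ω) (s : ℝ) : ContinuousWithinAt (X · ω) (Ici s) s := (hXc ω).continuousWithinAt
  have hlow : IsOptionalTime 𝒢 (hittingBtwn X (Ici a) t₀ t₁) :=
    isOptionalTime_hittingBtwn_of_isClosed hX.stronglyAdapted.adapted hXc isClosed_Ici
  have hup : IsOptionalTime 𝒢 (hittingBtwn X (Ioi a) t₀ t₁) :=
    isOptionalTime_hittingBtwn_of_isOpen hX.stronglyAdapted.adapted hXr isOpen_Ioi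
  have hae := (hup.const_min t).martingale_ae_eq_of_ae_le (hlow.const_min t)
    (fun _ => min_le_left _ _) (fun _ => min_le_left _ _) hX hXr <|
    Eventually.of_forall fun ω => eval_min_hittingBtwn_Ioi_le_Ici (hXc ω) ht.1 ht.2 a
  exact hae.mono fun _ => Eq.symm

end LevelPassage

section ClampedTime

variable {Ω : Type*} {mΩ : MeasurableSpace Ω}

/-- The filtration `ℱ` run along a monotone change of time `φ`. Clamping time to `[t₀, t₁]` turns a
process that is a martingale only on `[t₀, t₁]` into one indexed by the whole line. -/
def timeChange {ι κ : Type*} [Preorder ι] [Preorder κ] (ℱ : Filtration ι mΩ) {φ : κ → ι}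
    (hφ : Monotone φ) : Filtration κ mΩ where
  seq s := ℱ (φ s)
  mono' _ _ hst := ℱ.mono (hφ hst)
  le' s := ℱ.le (φ s)

variable {P : Measure Ω} {t₀ t₁ : ℝ} {ℱ : Filtration ℝ mΩ} {M : ℝ → Ω → ℝ}

lemma martingale_clamp (h : t₀ ≤ t₁) (hadp : Adapted ℱ M)
    (hmart : ∀ s t : ℝ, t₀ ≤ s → s ≤ t → t ≤ t₁ → P[M t | ℱ s] =ᵐ[P] M s) :
    Martingale (fun s => M (projIcc t₀ t₁ h s))
      (timeChange ℱ ((Subtype.mono_coe _).comp (monotone_projIcc h))) P :=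
  ⟨fun s => hadp.stronglyAdapted (projIcc t₀ t₁ h s), fun s t hst =>
    hmart _ _ (projIcc t₀ t₁ h s).2.1 (monotone_projIcc h hst) (projIcc t₀ t₁ h t).2.2⟩

theorem ae_eq_min_hittingBtwn_Ici_Ioi_of_martingale_on_Icc [IsFiniteMeasure P]
    (hadp : Adapted ℱ M)
    (hmart : ∀ s t : ℝ, t₀ ≤ s → s ≤ t → t ≤ t₁ → P[M t | ℱ s] =ᵐ[P] M s)
    (hcont : ∀ ω, ContinuousOn (M · ω) (Icc t₀ t₁)) {t : ℝ} (ht : t ∈ Icc t₀ t₁) (a : ℝ) :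
    ∀ᵐ ω ∂P, M (min t (hittingBtwn M (Ici a) t₀ t₁ ω)) ω =
      M (min t (hittingBtwn M (Ioi a) t₀ t₁ ω)) ω := by
  have h : t₀ ≤ t₁ := ht.1.trans ht.2
  let X (s : ℝ) : Ω → ℝ := M (projIcc t₀ t₁ h s)
  have hXc (ω : Ω) : Continuous (X · ω) :=
    (hcont ω).comp_continuous (by fun_prop) fun s => (projIcc t₀ t₁ h s).2
  have hXM {s : ℝ} (hs : s ∈ Icc t₀ t₁) : X s = M s := by simp only [X, projIcc_of_mem h hs]
  have hit_eq (S : Set ℝ) (ω : Ω) : hittingBtwn X S t₀ t₁ ω = hittingBtwn M S t₀ t₁ ω :=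
    hittingBtwn_congr fun s hs => congrFun (hXM hs) ω
  have min_mem (S : Set ℝ) (ω : Ω) : min t (hittingBtwn M S t₀ t₁ ω) ∈ Icc t₀ t₁ :=
    ⟨le_min ht.1 (le_hittingBtwn h ω), (min_le_left _ _).trans ht.2⟩
  filter_upwards [martingale_min_hittingBtwn_Ici_ae_eq_Ioi (martingale_clamp h hadp hmart) hXc ht a]
    with ω hω
  change X _ ω = X _ ω at hω
  rwa [hit_eq, hit_eq, hXM (min_mem _ ω), hXM (min_mem _ ω)] at hω

end ClampedTime

theorem stmt_13_general {Ω : Type*} {mΩ : MeasurableSpace Ω} {P : Measure Ω} [IsFiniteMeasure P]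
    (T : ℝ) (ℱ : Filtration ℝ mΩ) (M : ℝ → Ω → ℝ) (hadp : Adapted ℱ M)
    (hmart : ∀ s t : ℝ, 0 ≤ s → s ≤ t → t ≤ T → P[M t | ℱ s] =ᵐ[P] M s)
    (hcont : ∀ ω, ContinuousOn (fun s => M s ω) (Icc 0 T)) (a : ℝ) (τlow τup : Ω → ℝ)
    (hτlow : ∀ ω, τlow ω = sInf ({s ∈ Icc (0 : ℝ) T | a ≤ M s ω} ∪ {T}))
    (hτup : ∀ ω, τup ω = sInf ({s ∈ Icc (0 : ℝ) T | a < M s ω} ∪ {T})) :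
    ∀ t ∈ Icc (0 : ℝ) T, ∀ᵐ ω ∂P, M (min t (τlow ω)) ω = M (min t (τup ω)) ω := by
  intro t ht
  have low_eq (ω : Ω) : τlow ω = hittingBtwn M (Ici a) 0 T ω :=
    (hτlow ω).trans sInf_union_singleton_eq_hittingBtwn
  have up_eq (ω : Ω) : τup ω = hittingBtwn M (Ioi a) 0 T ω :=
    (hτup ω).trans sInf_union_singleton_eq_hittingBtwn
  simp only [low_eq, up_eq]
  exact ae_eq_min_hittingBtwn_Ici_Ioi_of_martingale_on_Icc hadp hmart hcont ht a

/-- For a continuous-path martingale `(M_t)_{t ∈ [0,T]}` with `M_0 = m` a.s. and `a > m`,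
the processes stopped at the pathwise hitting times
`τ̲_a = inf{t ∈ [0,T] : M_t ≥ a} ∧ T` and `τ̄_a = inf{t ∈ [0,T] : M_t > a} ∧ T`
coincide: for every `t ∈ [0,T]`, `M_{t ∧ τ̲_a} = M_{t ∧ τ̄_a}` almost surely. -/
theorem stmt_13 {Ω : Type*} {mΩ : MeasurableSpace Ω} {P : Measure Ω}
    [IsProbabilityMeasure P]
    (T : ℝ) (hT : 0 < T) (ℱ : Filtration ℝ mΩ)
    (M : ℝ → Ω → ℝ)
    (hadp : Adapted ℱ M)
    (hint : ∀ t ∈ Set.Icc (0 : ℝ) T, Integrable (M t) P)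
    (hmart : ∀ s t : ℝ, 0 ≤ s → s ≤ t → t ≤ T → P[M t | ℱ s] =ᵐ[P] M s)
    (hcont : ∀ ω, ContinuousOn (fun s => M s ω) (Set.Icc 0 T))
    (m : ℝ) (hM0 : ∀ᵐ ω ∂P, M 0 ω = m)
    (a : ℝ) (ha : m < a)
    (τlow τup : Ω → ℝ)
    (hτlow : ∀ ω, τlow ω = sInf ({s ∈ Set.Icc (0 : ℝ) T | a ≤ M s ω} ∪ {T}))
    (hτup : ∀ ω, τup ω = sInf ({s ∈ Set.Icc (0 : ℝ) T | a < M s ω} ∪ {T})) :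
    ∀ t ∈ Set.Icc (0 : ℝ) T,
      ∀ᵐ ω ∂P, M (min t (τlow ω)) ω = M (min t (τup ω)) ω := by
  exact stmt_13_general T ℱ M hadp hmart hcont a τlow τup hτlow hτup
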